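/- Let C = F_1 + … + F_t (t ≥ 2) be a pseudo-simple f-minimal low degree unmixed ΣΠΣΠ(t) circuit of size s (s ≥ 2) over a sufficiently large (e.g. infinite) field F, where f is a nonconstant univariate low degree polynomial such that f is an indecomposable factor of the polynomial computed by C. Then ‖F_1‖_{var(f)} ≤ s^(5t²), where var(f) is the (singleton) set of variables on which f depends. -/

import Mathlib

open MvPolynomial Finset

attribute [local instance 10] Classical.propDecidable

/-- Embed a univariate polynomial as a multivariate polynomial in the variable `x j`. -/
noncomputable def toMv {F : Type*} [CommSemiring F] {n : ℕ} (j : Fin n) (f : Polynomial F) :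
    MvPolynomial (Fin n) F :=
  Polynomial.aeval (X j) f

/-- The sparsity `‖P‖`: the number of monomials of `P` with nonzero coefficient. -/
def sparsity {F : Type*} [CommSemiring F] {n : ℕ} (P : MvPolynomial (Fin n) F) : ℕ :=
  P.support.card

/-- `‖P‖_A`: the number of distinct exponent vectors of monomials of `P` after setting
the exponents of the variables indexed by `A` to zero. -/
noncomputable def sparsityOn {F : Type*} [CommSemiring F] {n : ℕ} (A : Finset (Fin n))
    (P : MvPolynomial (Fin n) F) : ℕ :=
  (P.support.image fun m => Finsupp.filter (fun j => j ∉ A) m).card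

/-- Substitute `c` for the variable `x i`. -/
noncomputable def substAt {F : Type*} [CommSemiring F] {n : ℕ} (i : Fin n) (c : F)
    (P : MvPolynomial (Fin n) F) : MvPolynomial (Fin n) F :=
  aeval (fun j : Fin n => if j = i then MvPolynomial.C c else X j) P

/-- Substitute `a j` for `x j` for all `j < t` (for `t = 0` this is `P` itself). -/
noncomputable def substPrefix {F : Type*} [CommSemiring F] {n : ℕ} (t : ℕ) (a : Fin n → F)
    (P : MvPolynomial (Fin n) F) : MvPolynomial (Fin n) F :=
  aeval (fun j : Fin n => if (j : ℕ) < t then MvPolynomial.C (a j) else X j) P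

/-- The operator `D_{x i = c}(P, Q) = P·(Q|_{x i = c}) − (P|_{x i = c})·Q`. -/
noncomputable def Dop {F : Type*} [CommRing F] {n : ℕ} (i : Fin n) (c : F)
    (P Q : MvPolynomial (Fin n) F) : MvPolynomial (Fin n) F :=
  P * substAt i c Q - substAt i c P * Q

/-- `f` (a univariate polynomial, placed in the variable `x i`) is an indecomposable factor
of `Q`: `Q = f(x i) · H` with `H` not depending on `x i`. -/
def IsIndecompFactor {F : Type*} [CommSemiring F] {n : ℕ} (i : Fin n) (f : Polynomial F)
    (Q : MvPolynomial (Fin n) F) : Prop :=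
  ∃ H : MvPolynomial (Fin n) F, Q = toMv i f * H ∧ i ∉ H.vars

/-- The set `S 1 ∩ ⋯ ∩ S k` where `S i = {g i 1 (x 1), …, g i n (x n)}`. -/
noncomputable def commonFactors {F : Type*} [CommSemiring F] {n k : ℕ}
    (g : Fin k → Fin n → Polynomial F) : Finset (MvPolynomial (Fin n) F) :=
  (Finset.univ.image fun x : Fin k × Fin n => toMv x.2 (g x.1 x.2)).filter
    fun p => ∀ i : Fin k, ∃ j : Fin n, toMv j (g i j) = p

/-- The pseudo greatest common divisor: the product of the polynomials in `S 1 ∩ ⋯ ∩ S k`. -/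
noncomputable def pseudoGcd {F : Type*} [CommSemiring F] {n k : ℕ}
    (g : Fin k → Fin n → Polynomial F) : MvPolynomial (Fin n) F :=
  ∏ p ∈ commonFactors g, p

/-!
For a set `B` of terms, `f` is an indecomposable factor of `∑ i ∈ B, F i` exactly when the
indicator vector of `B` lies in the colon space `N / ∏ j ≠ d, U j` of the algebra `F ^ t`, where
`U j` is spanned by the coefficient vectors of `(g i j)ᵢ` and `N` is the space of relations among
the residues of the polynomials `β i • g i d` modulo the line spanned by `f`.

Over an infinite field every `U j` contains a unit, the vector of values at a common nonroot; after
rescaling, `1 ∈ U j`, and the colon space only shrinks as factors `U j` are added. It always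
contains the all-ones vector, so it shrinks strictly at most `t - 1` times, and the final space `M`
is stable under multiplication by the rescaled `U j` for all but at most `t - 1` indices `j`. For
such a `j`, a nonconstant element of the rescaled `U j` would put the indicator of a proper nonempty
set of terms into `M` by Lagrange interpolation, contradicting minimality. Hence `U j` is a line,
the monic polynomials `g i j` agree for all `i`, and they equal `1` because the circuit is
pseudo-simple. So each term has at most `t - 1` nontrivial factors in the variables other than
`x d`. A finite field may be replaced by its algebraic closure, since being an indecomposable factor
is a system of coefficient identities.
-/

section Colon

variable {K A J : Type*} [Field K] [CommRing A] [Algebra K A]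

theorem span_unit_mul_div_span_unit_mul (w : Aˣ) (N P : Submodule K A) :
    (Submodule.span K {(w : A)} * N) / (Submodule.span K {(w : A)} * P) = N / P := by
  have hw : Submodule.span K {(w⁻¹ : Aˣ).val} * Submodule.span K {(w : A)} = 1 := by
    rw [Submodule.span_mul_span, Set.singleton_mul_singleton, Units.inv_mul, Submodule.one_eq_span]
  refine eq_of_forall_le_iff fun L => ?_
  rw [Submodule.le_div_iff_mul_le, Submodule.le_div_iff_mul_le, mul_left_comm]
  refine ⟨fun h => ?_, fun h => mul_le_mul_right h _⟩
  simpa only [← mul_assoc, hw, one_mul] using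
    mul_le_mul_right h (Submodule.span K {(w⁻¹ : Aˣ).val})

theorem le_div_mul_of_mul_le {M N P Q : Submodule K A} (h : M ≤ N / P) (hQ : M * Q ≤ M) :
    M ≤ N / (P * Q) := by
  rw [Submodule.le_div_iff_mul_le] at h ⊢
  calc M * (P * Q) = M * Q * P := by ring
    _ ≤ M * P := mul_le_mul_left hQ P
    _ ≤ N := h

theorem mul_prod_le_of_forall_mul_le {M : Submodule K A} {U : J → Submodule K A} {T : Finset J}
    (h : ∀ j ∈ T, M * U j ≤ M) : M * ∏ j ∈ T, U j ≤ M :=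
  Finset.prod_induction U (M * · ≤ M)
    (fun P Q hP hQ => by
      rw [← mul_assoc]
      exact (mul_le_mul_left hP Q).trans hQ)
    (mul_one M).le h

theorem div_prod_anti (N : Submodule K A) {U : J → Submodule K A} (hU : ∀ j, 1 ≤ U j)
    {S T : Finset J} (hST : S ⊆ T) : N / ∏ j ∈ T, U j ≤ N / ∏ j ∈ S, U j := by
  have hprod : ∏ j ∈ S, U j ≤ ∏ j ∈ T, U j :=
    prod_le_prod_of_subset_of_one_le' hST fun j _ _ => hU j
  exact Submodule.le_div_iff_mul_le.2
    ((mul_le_mul_right hprod _).trans (Submodule.le_div_iff_mul_le.1 le_rfl))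

theorem exists_card_add_finrank_div_prod_le [FiniteDimensional K A] (N : Submodule K A)
    {U : J → Submodule K A} (hU : ∀ j, 1 ≤ U j) (T : Finset J) :
    ∃ S ⊆ T, #S + Module.finrank K ↥(N / ∏ j ∈ T, U j) ≤ Module.finrank K A ∧
      ∀ j ∈ T, j ∉ S → (N / ∏ j ∈ T, U j) * U j ≤ N / ∏ j ∈ T, U j := by
  obtain ⟨S, ⟨hST, hS⟩, hmin⟩ := exists_minimalFor_of_wellFoundedLT
    (fun S : Finset J => S ⊆ T ∧
      #S + Module.finrank K ↥(N / ∏ j ∈ S, U j) ≤ Module.finrank K A)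
    (fun S => Module.finrank K ↥(N / ∏ j ∈ S, U j))
    ⟨∅, empty_subset T, by rw [card_empty, zero_add]; exact Submodule.finrank_le _⟩
  have hstable : ∀ j ∈ T, j ∉ S → (N / ∏ j ∈ S, U j) * U j ≤ N / ∏ j ∈ S, U j := by
    intro j hjT hjS
    have heq : N / ∏ j ∈ insert j S, U j = N / ∏ j ∈ S, U j := by
      by_contra hne
      have hlt := Submodule.finrank_lt_finrank_of_lt
        ((div_prod_anti N hU (subset_insert j S)).lt_of_ne hne)
      refine hlt.not_ge (hmin ⟨insert_subset hjT hST, ?_⟩ hlt.le)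
      rw [card_insert_of_notMem hjS]
      omega
    rw [Submodule.le_div_iff_mul_le, mul_assoc, ← prod_insert hjS,
      ← Submodule.le_div_iff_mul_le, heq]
  have hfull : N / ∏ j ∈ T, U j = N / ∏ j ∈ S, U j := by
    refine (div_prod_anti N hU hST).antisymm ?_
    rw [← prod_sdiff hST, mul_comm]
    exact le_div_mul_of_mul_le le_rfl (mul_prod_le_of_forall_mul_le fun j hj =>
      hstable j (mem_sdiff.1 hj).1 (mem_sdiff.1 hj).2)
  exact ⟨S, hST, hfull ▸ hS, hfull ▸ hstable⟩

theorem exists_card_lt_finrank_forall_mul_mem [FiniteDimensional K A] [Nontrivial A]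
    {N : Submodule K A} {U : J → Submodule K A} {T : Finset J} (v : J → Aˣ)
    (hv : ∀ j, (v j : A) ∈ U j) (hone : 1 ∈ N / ∏ j ∈ T, U j) :
    ∃ S ⊆ T, #S < Module.finrank K A ∧ ∀ j ∈ T, j ∉ S → ∀ u ∈ U j,
      ∀ c ∈ N / ∏ j ∈ T, U j, c * (u * ↑(v j)⁻¹) ∈ N / ∏ j ∈ T, U j := by
  -- Rescaling every `U j` by `(v j)⁻¹` puts `1` into it; rescaling `N` by the product compensates.
  set U' : J → Submodule K A := fun j => Submodule.span K {((v j)⁻¹ : Aˣ).val} * U j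
  have hU' : ∀ j, 1 ≤ U' j := fun j => by
    rw [Submodule.one_le, ← (v j).inv_mul]
    exact Submodule.mul_mem_mul (Submodule.mem_span_singleton_self _) (hv j)
  have hdiv : (Submodule.span K {(∏ j ∈ T, (v j)⁻¹ : Aˣ).val} * N) / ∏ j ∈ T, U' j =
      N / ∏ j ∈ T, U j := by
    rw [prod_mul_distrib, Submodule.prod_span_singleton, ← Units.coe_prod,
      span_unit_mul_div_span_unit_mul]
  obtain ⟨S, hST, hcard, hstable⟩ := exists_card_add_finrank_div_prod_le
    (Submodule.span K {(∏ j ∈ T, (v j)⁻¹ : Aˣ).val} * N) hU' T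
  rw [hdiv] at hcard hstable
  have hpos : 0 < Module.finrank K ↥(N / ∏ j ∈ T, U j) :=
    Submodule.one_le_finrank_iff.2 (Submodule.ne_bot_iff _ |>.2 ⟨1, hone, one_ne_zero⟩)
  refine ⟨S, hST, by omega, fun j hjT hjS u hu c hc =>
    hstable j hjT hjS (Submodule.mul_mem_mul hc ?_)⟩
  rw [mul_comm]
  exact Submodule.mul_mem_mul (Submodule.mem_span_singleton_self _) hu

end Colon

section Pi

variable {K ι J : Type*} [Field K]

theorem indicator_fiber_mem_of_mul_mem [Finite ι] {M : Submodule K (ι → K)} (hone : 1 ∈ M)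
    {u : ι → K} (hu : ∀ c ∈ M, c * u ∈ M) (a : K) : {i | u i = a}.indicator 1 ∈ M := by
  have haeval : ∀ p : Polynomial K, Polynomial.aeval u p ∈ M := by
    intro p
    induction p using Polynomial.induction_on with
    | C r => simpa [Algebra.algebraMap_eq_smul_one] using M.smul_mem r hone
    | add p q hp hq => simpa using M.add_mem hp hq
    | monomial k r h => simpa [pow_succ, mul_assoc] using hu _ h
  cases nonempty_fintype ι
  convert haeval (Lagrange.basis (insert a (univ.image u)) id a)
  ext i
  rw [Polynomial.aeval_pi_apply₂, Polynomial.coe_aeval_eq_eval, Set.indicator_apply]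
  split_ifs with hi
  · rw [show u i = a from hi]
    exact (Lagrange.eval_basis_self Function.injective_id.injOn (mem_insert_self a _)).symm
  · exact (Lagrange.eval_basis_of_ne (v := id) (i := a) (fun h => hi h.symm) (mem_insert_of_mem
      (mem_image_of_mem u (mem_univ i)))).symm

theorem exists_card_lt_forall_eq_span_unit [Fintype ι] [Nonempty ι] {N : Submodule K (ι → K)}
    {U : J → Submodule K (ι → K)} {T : Finset J} (hU : ∀ j, ∃ v ∈ U j, IsUnit v)
    (hone : 1 ∈ N / ∏ j ∈ T, U j)
    (hmin : ∀ B : Finset ι, B.Nonempty → B ≠ univ →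
      (B : Set ι).indicator 1 ∉ N / ∏ j ∈ T, U j) :
    ∃ S ⊆ T, #S < Fintype.card ι ∧
      ∀ j ∈ T, j ∉ S → ∃ v, IsUnit v ∧ U j = Submodule.span K {v} := by
  choose v hv hunit using hU
  choose v hv' using hunit
  obtain rfl := funext hv'
  obtain ⟨S, hST, hcard, hstable⟩ := exists_card_lt_finrank_forall_mul_mem v hv hone
  rw [Module.finrank_fintype_fun_eq_card] at hcard
  refine ⟨S, hST, hcard, fun j hjT hjS => ⟨v j, (v j).isUnit, ?_⟩⟩
  refine le_antisymm (fun u hu => ?_) ((Submodule.span_singleton_le_iff_mem _ _).2 (hv j))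
  set r : ι → K := u * ↑(v j)⁻¹
  obtain ⟨i₀⟩ := ‹Nonempty ι›
  have hconst : (univ.filter fun i => r i = r i₀) = univ := by
    by_contra hne
    refine hmin _ ⟨i₀, by simp⟩ hne ?_
    simpa only [coe_filter, mem_univ, true_and] using
      indicator_fiber_mem_of_mul_mem hone (hstable j hjT hjS u hu) (r i₀)
  refine Submodule.mem_span_singleton.2 ⟨r i₀, ?_⟩
  calc r i₀ • (v j).val = r * (v j).val := by
        ext i
        rw [Pi.smul_apply, Pi.mul_apply, smul_eq_mul, (filter_eq_self.1 hconst) i (mem_univ i)]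
    _ = u := Units.inv_mul_cancel_right u (v j)

end Pi

section Coefficients

theorem toMv_map {R S : Type*} [CommSemiring R] [CommSemiring S] {n : ℕ} (φ : R →+* S)
    (j : Fin n) (p : Polynomial R) : toMv j (p.map φ) = map φ (toMv j p) := by
  rw [toMv, toMv, Polynomial.aeval_def, Polynomial.aeval_def, Polynomial.eval₂_map,
    Polynomial.hom_eval₂, map_X]
  congr 1
  ext r
  simp [algebraMap_eq]

variable {R : Type*} [CommSemiring R] {n : ℕ}

theorem toMv_eq_sum_monomial (j : Fin n) (p : Polynomial R) :
    toMv j p = ∑ k ∈ p.support, monomial (Finsupp.single j k) (p.coeff k) := by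
  rw [toMv, Polynomial.aeval_def, Polynomial.eval₂_eq_sum, Polynomial.sum_def]
  simp only [X_pow_eq_monomial, algebraMap_eq, C_mul_monomial, mul_one]

theorem coeff_prod_toMv (p : Fin n → Polynomial R) (m : Fin n →₀ ℕ) :
    coeff m (∏ j, toMv j (p j)) = ∏ j, (p j).coeff (m j) := by
  have hsum (k : Fin n → ℕ) : ∑ j, Finsupp.single j (k j) = m ↔ m = k := by
    rw [← Finsupp.equivFunOnFinite_symm_eq_sum, Equiv.symm_apply_eq, eq_comm]
    rfl
  simp only [toMv_eq_sum_monomial, prod_univ_sum, ← monomial_sum_prod, coeff_sum, coeff_monomial,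
    hsum]
  rw [sum_ite_eq, ite_eq_left_iff]
  intro hm
  obtain ⟨j, hj⟩ := not_forall.1 (mt Fintype.mem_piFinset.2 hm)
  exact (prod_eq_zero (mem_univ j) (Polynomial.notMem_support_iff.1 hj)).symm

theorem coeff_toMv_mul_of_notMem_vars {d : Fin n} {H : MvPolynomial (Fin n) R} (hd : d ∉ H.vars)
    (f : Polynomial R) (m : Fin n →₀ ℕ) :
    coeff m (toMv d f * H) = f.coeff (m d) * coeff (m.erase d) H := by
  have hcoeff {m' : Fin n →₀ ℕ} (h : m' d ≠ 0) : coeff m' H = 0 := by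
    contrapose! hd
    exact (mem_vars_iff_mem_support d).2
      ⟨m', mem_support_iff.2 hd, Finsupp.mem_support_iff.2 h⟩
  rw [toMv_eq_sum_monomial, sum_mul, coeff_sum]
  simp only [coeff_monomial_mul', Finsupp.single_le_iff]
  rw [sum_eq_single (m d)]
  · rw [if_pos le_rfl, tsub_eq_of_eq_add_rev (Finsupp.single_add_erase d m).symm]
  · intro k _ hk
    rw [ite_eq_right_iff]
    intro hle
    have hne : (m - Finsupp.single d k) d ≠ 0 := by
      rw [Finsupp.tsub_apply, Finsupp.single_eq_same]
      omega
    rw [hcoeff hne, mul_zero]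
  · intro h
    rw [Polynomial.notMem_support_iff.1 h, zero_mul, ite_self]

theorem sparsityOn_C_mul_prod_toMv_le (A : Finset (Fin n)) (b : R) (p : Fin n → Polynomial R) :
    sparsityOn A (C b * ∏ j, toMv j (p j)) ≤ ∏ j ∈ Aᶜ, #(p j).support := by
  rw [← card_pi]
  refine card_le_card_of_injOn (fun m j _ => m j) ?_ ?_
  · intro _ hm
    obtain ⟨m, hsupp, rfl⟩ := mem_image.1 hm
    rw [mem_support_iff, coeff_C_mul, coeff_prod_toMv] at hsupp
    refine mem_pi.2 fun j hj => ?_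
    simp only [Finsupp.filter_apply_pos (fun j => j ∉ A) m (mem_compl.1 hj),
      Polynomial.mem_support_iff]
    exact fun h => hsupp (by rw [prod_eq_zero (mem_univ j) h, mul_zero])
  · intro _ hm _ hm' h
    obtain ⟨m, -, rfl⟩ := mem_image.1 hm
    obtain ⟨m', -, rfl⟩ := mem_image.1 hm'
    ext j
    by_cases hj : j ∈ A
    · simp [hj]
    · exact congrFun₂ h j (mem_compl.2 hj)

end Coefficients

section IndecomposableFactor

variable {F : Type*} [Field F] {n : ℕ}

theorem isIndecompFactor_iff_coeff {d : Fin n} {f : Polynomial F} (hf : f ≠ 0)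
    {Q : MvPolynomial (Fin n) F} :
    IsIndecompFactor d f Q ↔ ∀ m : Fin n →₀ ℕ,
      f.leadingCoeff * coeff m Q = f.coeff (m d) * coeff (m.update d f.natDegree) Q := by
  have hlead : f.leadingCoeff ≠ 0 := Polynomial.leadingCoeff_ne_zero.2 hf
  constructor
  · rintro ⟨H, rfl, hd⟩ m
    simp only [coeff_toMv_mul_of_notMem_vars hd]
    rw [Finsupp.coe_update, Function.update_self, Finsupp.erase_update_eq_erase,
      Polynomial.coeff_natDegree, mul_left_comm]
  · intro h
    set H := (Q.divMonomial (Finsupp.single d f.natDegree)).modMonomial (Finsupp.single d 1)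
    have hd : d ∉ (C f.leadingCoeff⁻¹ * H).vars := by
      rw [mem_vars_iff_mem_support]
      rintro ⟨m, hm, hmd⟩
      rw [mem_support_iff, coeff_C_mul] at hm
      refine hm (mul_eq_zero_of_right _ (coeff_modMonomial_of_le _ ?_))
      rw [Finsupp.single_le_iff, Nat.one_le_iff_ne_zero]
      exact Finsupp.mem_support_iff.1 hmd
    refine ⟨C f.leadingCoeff⁻¹ * H, ?_, hd⟩
    ext m
    rw [coeff_toMv_mul_of_notMem_vars hd, coeff_C_mul, coeff_modMonomial_of_not_le _ (by simp),
      coeff_divMonomial, ← Finsupp.update_eq_single_add_erase, mul_left_comm, ← h m,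
      inv_mul_cancel_left₀ hlead]

theorem isIndecompFactor_map_iff {K : Type*} [Field K] (φ : F →+* K) {d : Fin n}
    {f : Polynomial F} (hf : f ≠ 0) {Q : MvPolynomial (Fin n) F} :
    IsIndecompFactor d (f.map φ) (map φ Q) ↔ IsIndecompFactor d f Q := by
  rw [isIndecompFactor_iff_coeff hf, isIndecompFactor_iff_coeff ((Polynomial.map_ne_zero hf))]
  simp only [Polynomial.leadingCoeff_map, Polynomial.natDegree_map, Polynomial.coeff_map,
    coeff_map, ← map_mul, φ.injective.eq_iff]

end IndecomposableFactor

section CoeffSpace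

variable {K ι : Type*} [Field K]

/-- The column space of the coefficient matrix of a family of polynomials, with one row for each
polynomial. It measures how far the polynomials are from being proportional. -/
def coeffSpace (p : ι → Polynomial K) : Submodule K (ι → K) :=
  Submodule.span K (Set.range fun k i => (p i).coeff k)

theorem eval_mem_coeffSpace [Finite ι] (p : ι → Polynomial K) (x : K) :
    (fun i => (p i).eval x) ∈ coeffSpace p := by
  cases nonempty_fintype ι
  have heval : (fun i => (p i).eval x) = ∑ k ∈ range (univ.sup (fun i => (p i).natDegree) + 1),
      x ^ k • fun i => (p i).coeff k := by
    ext i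
    rw [Polynomial.eval_eq_sum_range'
      (Nat.lt_succ_of_le (le_sup (f := fun i => (p i).natDegree) (mem_univ i))), Finset.sum_apply]
    exact sum_congr rfl fun k _ => mul_comm _ _
  rw [heval]
  exact Submodule.sum_smul_mem _ _ fun k _ => Submodule.subset_span ⟨k, rfl⟩

theorem exists_forall_eval_ne_zero [Finite ι] [Infinite K] {p : ι → Polynomial K}
    (hp : ∀ i, p i ≠ 0) : ∃ x, ∀ i, (p i).eval x ≠ 0 := by
  cases nonempty_fintype ι
  contrapose! hp
  have hprod : ∏ i, p i = 0 := Polynomial.funext fun x => by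
    obtain ⟨i, hi⟩ := hp x
    rw [Polynomial.eval_prod, Polynomial.eval_zero, prod_eq_zero (mem_univ i) hi]
  simpa [prod_eq_zero_iff] using hprod

theorem exists_isUnit_mem_coeffSpace [Finite ι] [Infinite K] {p : ι → Polynomial K}
    (hp : ∀ i, p i ≠ 0) : ∃ v ∈ coeffSpace p, IsUnit v := by
  obtain ⟨x, hx⟩ := exists_forall_eval_ne_zero hp
  exact ⟨_, eval_mem_coeffSpace p x, Pi.isUnit_iff.2 fun i => (hx i).isUnit⟩

theorem eq_of_coeffSpace_eq_span_isUnit {p : ι → Polynomial K} (hp : ∀ i, (p i).Monic)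
    {v : ι → K} (hv : IsUnit v) (hspan : coeffSpace p = Submodule.span K {v}) (i i' : ι) :
    p i = p i' := by
  have hprop : Polynomial.C (v i') * p i = Polynomial.C (v i) * p i' := by
    ext k
    obtain ⟨c, hc⟩ := Submodule.mem_span_singleton.1
      (hspan.le (Submodule.subset_span ⟨k, rfl⟩))
    have hcoeff (i : ι) : (p i).coeff k = c * v i := (congrFun hc i).symm
    rw [Polynomial.coeff_C_mul, Polynomial.coeff_C_mul, hcoeff, hcoeff]
    ring
  have hlead : v i' = v i := by
    simpa [Polynomial.leadingCoeff_mul, (hp _).leadingCoeff] using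
      congrArg Polynomial.leadingCoeff hprop
  rw [hlead] at hprop
  exact mul_left_cancel₀ (Polynomial.C_ne_zero.2 (Pi.isUnit_iff.1 hv i).ne_zero) hprop

theorem mem_div_prod_span_range_iff {A J κ : Type*} [CommRing A] [Algebra K A] [Nonempty κ]
    {N : Submodule K A} {T : Finset J} {v : J → κ → A} {c : A} :
    c ∈ N / ∏ j ∈ T, Submodule.span K (Set.range (v j)) ↔
      ∀ k : J → κ, c * ∏ j ∈ T, v j (k j) ∈ N := by
  have hspan (s : Set A) : c ∈ N / Submodule.span K s ↔ ∀ y ∈ s, c * y ∈ N :=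
    Submodule.mem_div_iff_forall_mul_mem.trans
      (Submodule.span_le (p := N.comap (LinearMap.mulLeft K c)))
  rw [Submodule.prod_span, hspan]
  constructor
  · intro h k
    exact h _ (Set.finsetProd_mem_finsetProd T _ _ fun j _ => ⟨k j, rfl⟩)
  · intro h y hy
    obtain ⟨w, hw, rfl⟩ := (Set.mem_finsetProd T _ y).1 hy
    have (j : J) : ∃ k, j ∈ T → v j k = w j := by
      by_cases hj : j ∈ T
      · obtain ⟨k, hk⟩ := hw hj
        exact ⟨k, fun _ => hk⟩
      · exact ⟨Classical.arbitrary κ, fun h => absurd h hj⟩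
    choose k hk using this
    rw [← prod_congr rfl hk]
    exact h k

end CoeffSpace

section Circuit

variable {F ι : Type*} [Field F] {n : ℕ}

/-- The residue of `p` modulo the line spanned by `f`, freed of denominators: a linear function
of `p` that vanishes exactly on the scalar multiples of `f` when `f ≠ 0` (for `f = 0` it is the
junk value `0`). -/
noncomputable def scaledResidue (f p : Polynomial F) : Polynomial F :=
  Polynomial.C f.leadingCoeff * p - Polynomial.C (p.coeff f.natDegree) * f

theorem isIndecompFactor_sum_iff (B : Finset ι) (β : ι → F) (g : ι → Fin n → Polynomial F)
    (d : Fin n) {f : Polynomial F} (hf : f ≠ 0) :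
    IsIndecompFactor d f (∑ i ∈ B, C (β i) * ∏ j, toMv j (g i j)) ↔
      ∀ k : Fin n → ℕ, ∑ i ∈ B,
        (∏ j ∈ {d}ᶜ, (g i j).coeff (k j)) • β i • scaledResidue f (g i d) = 0 := by
  have hcoeff (k : Fin n → ℕ) (m : Fin n →₀ ℕ) (hm : ∀ j ≠ d, m j = k j) :
      coeff m (∑ i ∈ B, C (β i) * ∏ j, toMv j (g i j)) =
        ∑ i ∈ B, (∏ j ∈ {d}ᶜ, (g i j).coeff (k j)) * β i * (g i d).coeff (m d) := by
    simp only [coeff_sum, coeff_C_mul, coeff_prod_toMv]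
    refine sum_congr rfl fun i _ => ?_
    rw [Fintype.prod_eq_mul_prod_compl d,
      prod_congr rfl fun j hj => by rw [hm j (by simpa using hj)]]
    ring
  have hresidue (k : Fin n → ℕ) (e : ℕ) :
      (∑ i ∈ B, (∏ j ∈ {d}ᶜ, (g i j).coeff (k j)) • β i • scaledResidue f (g i d)).coeff e =
        f.leadingCoeff * (∑ i ∈ B, (∏ j ∈ {d}ᶜ, (g i j).coeff (k j)) * β i * (g i d).coeff e) -
        f.coeff e * ∑ i ∈ B,
          (∏ j ∈ {d}ᶜ, (g i j).coeff (k j)) * β i * (g i d).coeff f.natDegree := by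
    simp only [scaledResidue, Polynomial.finsetSum_coeff, Polynomial.coeff_smul,
      Polynomial.coeff_sub, Polynomial.coeff_C_mul, smul_eq_mul, mul_sum, ← sum_sub_distrib]
    exact sum_congr rfl fun i _ => by ring
  rw [isIndecompFactor_iff_coeff hf]
  constructor
  · intro h k
    ext e
    have hm := h (Finsupp.equivFunOnFinite.symm (Function.update k d e))
    rw [hcoeff k _ (by simp +contextual), hcoeff k _ (by simp +contextual)] at hm
    simpa [hresidue, sub_eq_zero] using hm
  · intro h m
    have hm := congrArg (Polynomial.coeff · (m d)) (h m)
    rw [hcoeff m _ (by simp +contextual), hcoeff m _ (by simp +contextual)]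
    simpa [hresidue, sub_eq_zero] using hm

theorem indicator_mem_div_prod_coeffSpace_iff [Fintype ι] (B : Finset ι) (β : ι → F)
    (g : ι → Fin n → Polynomial F) (d : Fin n) {f : Polynomial F} (hf : f ≠ 0) :
    (B : Set ι).indicator 1 ∈
        LinearMap.ker (Fintype.linearCombination F fun i => β i • scaledResidue f (g i d)) /
          ∏ j ∈ {d}ᶜ, coeffSpace (fun i => g i j) ↔
      IsIndecompFactor d f (∑ i ∈ B, C (β i) * ∏ j, toMv j (g i j)) := by
  simp only [coeffSpace]
  rw [mem_div_prod_span_range_iff, isIndecompFactor_sum_iff B β g d hf]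
  refine forall_congr' fun k => ?_
  rw [LinearMap.mem_ker, Fintype.linearCombination_apply]
  simp [Set.indicator_apply, ite_smul]

end Circuit

theorem exists_card_lt_forall_eq_of_fMinimal {F ι : Type*} [Field F] [Fintype ι] [Nonempty ι]
    {n : ℕ} {β : ι → F} {g : ι → Fin n → Polynomial F} (hmonic : ∀ i j, (g i j).Monic)
    {d : Fin n} {f : Polynomial F} (hf : f ≠ 0)
    (hfmin : ∀ B : Finset ι, B.Nonempty → B ≠ univ →
      ¬ IsIndecompFactor d f (∑ i ∈ B, C (β i) * ∏ j, toMv j (g i j)))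
    (hfC : IsIndecompFactor d f (∑ i, C (β i) * ∏ j, toMv j (g i j))) :
    ∃ S ⊆ {d}ᶜ, #S < Fintype.card ι ∧ ∀ j ≠ d, j ∉ S → ∀ i i', g i j = g i' j := by
  let φ := algebraMap F (AlgebraicClosure F)
  have hmap (B : Finset ι) :
      map φ (∑ i ∈ B, C (β i) * ∏ j, toMv j (g i j)) =
        ∑ i ∈ B, C (φ (β i)) * ∏ j, toMv j ((g i j).map φ) := by
    simp only [map_sum, map_mul, map_prod, map_C, toMv_map]
  have hmonic' : ∀ i j, ((g i j).map φ).Monic := fun i j => (hmonic i j).map φ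
  simp only [← isIndecompFactor_map_iff φ hf, hmap,
    ← indicator_mem_div_prod_coeffSpace_iff _ _ _ d (Polynomial.map_ne_zero hf)] at hfmin hfC
  rw [coe_univ, Set.indicator_univ] at hfC
  obtain ⟨S, hS, hcard, hline⟩ := exists_card_lt_forall_eq_span_unit
    (fun j => exists_isUnit_mem_coeffSpace fun i => (hmonic' i j).ne_zero) hfC hfmin
  refine ⟨S, hS, hcard, fun j hjd hjS i i' => Polynomial.map_injective φ φ.injective ?_⟩
  obtain ⟨v, hv, hspan⟩ := hline j (by simpa using hjd) hjS
  exact eq_of_coeffSpace_eq_span_isUnit (fun i => hmonic' i j) hv hspan i i'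

theorem eq_one_of_pseudoGcd_eq_one {R : Type*} [CommSemiring R] {n t : ℕ}
    {g : Fin t → Fin n → Polynomial R} (hps : pseudoGcd g = 1) {i : Fin t} {j : Fin n}
    (hmonic : (g i j).Monic) (hconst : ∀ i', g i' j = g i j) : g i j = 1 := by
  have hmem : toMv j (g i j) ∈ commonFactors g :=
    mem_filter.2 ⟨mem_image.2 ⟨(i, j), mem_univ _, rfl⟩, fun i' => ⟨j, by rw [hconst i']⟩⟩
  have hunit : IsUnit (toMv j (g i j)) :=
    isUnit_of_dvd_one (hps ▸ dvd_prod_of_mem (fun p => p) hmem)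
  have hback : aeval (fun _ => Polynomial.X) (toMv j (g i j)) = g i j := by
    rw [toMv, ← Polynomial.aeval_algHom_apply, aeval_X, Polynomial.aeval_X_left_apply]
  exact hmonic.eq_one_of_isUnit (hback ▸ hunit.map (aeval fun _ => Polynomial.X))

theorem sparsityOn_var_le_of_fMinimal_general {F : Type*} [Field F] {n t s : ℕ} (β : Fin t → F)
    (g : Fin t → Fin n → Polynomial F) (hmonic : ∀ i j, (g i j).Monic)
    (hsize : ∀ i j, #(g i j).support ≤ s) (Fp : Fin t → MvPolynomial (Fin n) F)
    (hFp : ∀ i, Fp i = C (β i) * ∏ j, toMv j (g i j)) (hps : pseudoGcd g = 1)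
    (d : Fin n) (f : Polynomial F) (hf : f ≠ 0)
    (hfmin : ∀ B : Finset (Fin t), B.Nonempty → B ≠ univ →
      ¬ IsIndecompFactor d f (∑ i ∈ B, Fp i))
    (hfC : IsIndecompFactor d f (∑ i, Fp i)) (i : Fin t) :
    sparsityOn {d} (Fp i) ≤ s ^ (t - 1) := by
  obtain rfl := funext hFp
  have : Nonempty (Fin t) := ⟨i⟩
  obtain ⟨S, hSd, hcard, hconst⟩ := exists_card_lt_forall_eq_of_fMinimal hmonic hf hfmin hfC
  rw [Fintype.card_fin] at hcard
  have hone : ∀ j ∈ ({d}ᶜ : Finset (Fin n)), j ∉ S → #(g i j).support = 1 := by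
    intro j hj hjS
    have hjd : j ≠ d := by simpa using hj
    rw [eq_one_of_pseudoGcd_eq_one hps (hmonic i j) fun i' => hconst j hjd hjS i' i,
      ← Polynomial.C_1, Polynomial.support_C one_ne_zero, card_singleton]
  have hs : 1 ≤ s := (card_pos.2 (Polynomial.support_nonempty.2 (hmonic i d).ne_zero)).trans_le
    (hsize i d)
  calc sparsityOn {d} (C (β i) * ∏ j, toMv j (g i j))
      ≤ ∏ j ∈ {d}ᶜ, #(g i j).support := sparsityOn_C_mul_prod_toMv_le {d} (β i) (g i)
    _ = ∏ j ∈ S, #(g i j).support := (prod_subset hSd hone).symm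
    _ ≤ s ^ #S := prod_le_pow_card S _ s fun j _ => hsize i j
    _ ≤ s ^ (t - 1) := Nat.pow_le_pow_right hs (Nat.le_sub_one_of_lt hcard)

/-- Claim 3.1.3. Let `C = F 0 + ⋯ + F (t-1)` (`t ≥ 2`) be a
pseudo-simple `f`-minimal low degree unmixed ΣΠΣΠ(t) circuit of size `s ≥ 2` over an
infinite field, where `f` is a nonconstant univariate low degree polynomial in the
variable `x d` that is an indecomposable factor of the polynomial computed by `C`.
Then `‖F 1‖_{var f} ≤ s ^ (5 t²)`. -/
theorem sparsityOn_var_le_of_fMinimal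
    {F : Type*} [Field F] [Infinite F] {n t s : ℕ} [NeZero t] (ht : 2 ≤ t) (hs : 2 ≤ s)
    (β : Fin t → F) (hβ : ∀ i, β i ≠ 0)
    (g : Fin t → Fin n → Polynomial F)
    (hmonic : ∀ i j, (g i j).Monic)
    (hsize : ∀ i j, (g i j).support.card ≤ s)
    (Fp : Fin t → MvPolynomial (Fin n) F)
    (hFp : ∀ i, Fp i = MvPolynomial.C (β i) * ∏ j : Fin n, toMv j (g i j))
    (hlow : (∑ i, Fp i).totalDegree ≤ n)
    (hps : pseudoGcd g = 1)
    (d : Fin n) (f : Polynomial F) (hf : f.natDegree ≠ 0) (hflow : f.natDegree ≤ n)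
    (hfmin : ∀ A : Finset (Fin t), A.Nonempty → A ≠ Finset.univ →
      ¬ IsIndecompFactor d f (∑ i ∈ A, Fp i))
    (hfC : IsIndecompFactor d f (∑ i, Fp i)) :
    sparsityOn {d} (Fp 0) ≤ s ^ (5 * t ^ 2) := by
  have hexp : t - 1 ≤ 5 * t ^ 2 := by nlinarith [Nat.sub_le t 1]
  exact (sparsityOn_var_le_of_fMinimal_general β g hmonic hsize Fp hFp hps d f
    (Polynomial.ne_zero_of_natDegree_gt (Nat.pos_of_ne_zero hf)) hfmin hfC 0).trans
    (Nat.pow_le_pow_right (by omega) hexp)
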